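/- Let M, K, N_UE be positive integers, N = K·N_UE, and σ > 0 a real number. For k = 1, …, K let H_k ∈ ℂ^{M×N_UE}, assume the spatial-orthogonality condition H_kᴴ H_j = 0 for all k ≠ j, and let H = [H_1, …, H_K] ∈ ℂ^{M×N} be their horizontal concatenation. Define the LMMSE Gram matrix A = Hᴴ H + σ² I_N (which is Hermitian positive definite). Let L = c·N_UE for a positive integer c such that d = N/L is a positive integer; let P_d ∈ ℂ^{N×N} be the block diagonal matrix consisting of the d consecutive L×L diagonal blocks of A (with all entries outside these blocks set to zero), let M_d = P_d⁻¹, and let Ā = M_d^{1/2} A M_d^{1/2}, where M_d^{1/2} is the Hermitian positive definite square root of M_d. Then Ā = I_N, so κ(Ā) = 1; and if A is not a scalar multiple of I_N, then κ(Ā) < κ(A), where κ(B) = ‖B‖₂‖B⁻¹‖₂. -/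

import Mathlib

open scoped ComplexOrder

/-- The spectral norm (largest singular value) of a complex matrix, realized as the
operator norm of the induced linear map between Euclidean spaces. -/
noncomputable def specNorm {m n : Type*} [Fintype m] [Fintype n] [DecidableEq n]
    (B : Matrix m n ℂ) : ℝ :=
  ‖LinearMap.toContinuousLinearMap (Matrix.toEuclideanLin B)‖


theorem specNorm_one_aux {n : Type*} [Fintype n] [DecidableEq n] [Nonempty n] :
    specNorm (1 : Matrix n n ℂ) = 1 := by
  have h : LinearMap.toContinuousLinearMap (Matrix.toEuclideanLin (1 : Matrix n n ℂ))
      = ContinuousLinearMap.id ℂ (EuclideanSpace ℂ n) := by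
    ext x i
    simp
  unfold specNorm
  rw [h]
  exact ContinuousLinearMap.norm_id

theorem le_specNorm_aux {n : Type*} [Fintype n] [DecidableEq n] (B : Matrix n n ℂ)
    (r : ℝ) (hr : 0 ≤ r) (v : EuclideanSpace ℂ n) (hv : ‖v‖ = 1)
    (h : B.mulVec v.ofLp = r • v.ofLp) : r ≤ specNorm B := by
  have h1 := (LinearMap.toContinuousLinearMap (Matrix.toEuclideanLin B)).le_opNorm v
  have h2 : LinearMap.toContinuousLinearMap (Matrix.toEuclideanLin B) v = r • v := by
    ext i
    have := congrFun h i
    simpa using this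
  rw [h2, norm_smul, hv, Real.norm_of_nonneg hr, mul_one, mul_one] at h1
  exact h1

theorem one_lt_cond_aux {n : Type*} [Fintype n] [DecidableEq n] [Nonempty n]
    (A : Matrix n n ℂ) (hA : A.PosDef) (hne : ∀ μ : ℂ, A ≠ μ • (1 : Matrix n n ℂ)) :
    1 < specNorm A * specNorm A⁻¹ := by
  by_contra hcon
  push Not at hcon
  have hdet : IsUnit A.det := (Matrix.isUnit_iff_isUnit_det A).mp hA.isUnit
  have hpos := hA.eigenvalues_pos
  have h1 : ∀ i, hA.1.eigenvalues i ≤ specNorm A := fun i =>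
    le_specNorm_aux A _ (hpos i).le (hA.1.eigenvectorBasis i)
      (hA.1.eigenvectorBasis.orthonormal.1 i) (hA.1.mulVec_eigenvectorBasis i)
  have h2 : ∀ i, (hA.1.eigenvalues i)⁻¹ ≤ specNorm A⁻¹ := fun i => by
    refine le_specNorm_aux A⁻¹ _ (inv_pos.mpr (hpos i)).le (hA.1.eigenvectorBasis i)
      (hA.1.eigenvectorBasis.orthonormal.1 i) ?_
    have h := congrArg (fun w => (hA.1.eigenvalues i)⁻¹ • A⁻¹.mulVec w)
      (hA.1.mulVec_eigenvectorBasis i)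
    simp only [Matrix.mulVec_mulVec, Matrix.nonsing_inv_mul A hdet, Matrix.one_mulVec,
      Matrix.mulVec_smul, smul_smul, inv_mul_cancel₀ (hpos i).ne', one_smul] at h
    exact h.symm
  have h3 : ∀ i j, hA.1.eigenvalues i ≤ hA.1.eigenvalues j := fun i j => by
    have h := mul_le_mul (h1 i) (h2 j) (inv_pos.mpr (hpos j)).le ((hpos i).le.trans (h1 i))
    have h' := h.trans hcon
    rwa [← div_eq_mul_inv, div_le_one (hpos j)] at h'
  obtain ⟨i0⟩ := ‹Nonempty n›
  apply hne (hA.1.eigenvalues i0 : ℂ)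
  have hd : Matrix.diagonal (RCLike.ofReal ∘ hA.1.eigenvalues : n → ℂ)
      = (hA.1.eigenvalues i0 : ℂ) • (1 : Matrix n n ℂ) := by
    rw [Matrix.smul_one_eq_diagonal]
    congr 1
    funext i
    simp [le_antisymm (h3 i i0) (h3 i0 i)]
  have hs := hA.1.spectral_theorem
  rw [hd, map_smul, map_one] at hs
  exact hs

/-- **Block-Jacobi preconditioning of the LMMSE Gram matrix under spatial
orthogonality.**  Users `k = 1, …, K` have channels `Hk k ∈ ℂ^{M×N_UE}` with
`(Hk k)ᴴ (Hk j) = 0` for `k ≠ j`; `H` is their horizontal concatenation (columns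
indexed by `Fin K × Fin NUE` in user-major order) and `A = Hᴴ H + σ² I` is the LMMSE
Gram matrix.  The block-Jacobi preconditioner uses block size `L = c·NUE` with `c ∣ K`
(so `d = N/L` is a positive integer): `Pd` is the block diagonal part of `A` obtained
by keeping the `d` consecutive `L×L` diagonal blocks (columns `(k,a)`, `(k',a')` lie in
the same block iff `⌊k/c⌋ = ⌊k'/c⌋`), `M_d = Pd⁻¹`, and `S = M_d^{1/2}` is its
Hermitian positive definite square root.  Then `Ā = S A S = I`, so `κ(Ā) = 1`; and if
`A` is not a scalar multiple of `I`, then `κ(Ā) < κ(A)`, where `κ(B) = ‖B‖₂‖B⁻¹‖₂`. -/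
theorem block_jacobi_preconditioned_condition_number
    (M K NUE c : ℕ) (hM : 0 < M) (hK : 0 < K) (hNUE : 0 < NUE)
    (hc : 0 < c) (hcK : c ∣ K) (σ : ℝ) (hσ : 0 < σ)
    (Hk : Fin K → Matrix (Fin M) (Fin NUE) ℂ)
    (horth : ∀ k j : Fin K, k ≠ j → (Hk k).conjTranspose * Hk j = 0)
    (H : Matrix (Fin M) (Fin K × Fin NUE) ℂ)
    (hH : ∀ (m : Fin M) (k : Fin K) (a : Fin NUE), H m (k, a) = Hk k m a)
    (A : Matrix (Fin K × Fin NUE) (Fin K × Fin NUE) ℂ)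
    (hA : A = H.conjTranspose * H + (σ ^ 2 : ℂ) • 1)
    (Pd : Matrix (Fin K × Fin NUE) (Fin K × Fin NUE) ℂ)
    (hPd : ∀ i i' : Fin K × Fin NUE,
      Pd i i' = if (i.1 : ℕ) / c = (i'.1 : ℕ) / c then A i i' else 0)
    (S : Matrix (Fin K × Fin NUE) (Fin K × Fin NUE) ℂ)
    (hSpd : S.PosDef) (hS : S * S = Pd⁻¹) :
    S * A * S = 1 ∧
    specNorm (S * A * S) * specNorm (S * A * S)⁻¹ = 1 ∧
    ((∀ μ : ℂ, A ≠ μ • (1 : Matrix (Fin K × Fin NUE) (Fin K × Fin NUE) ℂ)) →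
      specNorm (S * A * S) * specNorm (S * A * S)⁻¹ < specNorm A * specNorm A⁻¹) := by
  have hPA : Pd = A := by
    ext ⟨k, a⟩ ⟨j, b⟩
    rw [hPd]
    split_ifs with h
    · rfl
    · have hkj : k ≠ j := fun e => h (by rw [e])
      have h0 := congrFun (congrFun (horth k j hkj) a) b
      have hne : ((k, a) : Fin K × Fin NUE) ≠ (j, b) := fun e => hkj (Prod.ext_iff.mp e).1
      simp only [Matrix.mul_apply, Matrix.conjTranspose_apply, Matrix.zero_apply] at h0
      rw [hA]
      simpa [Matrix.mul_apply, hH, Matrix.one_apply_ne hne] using h0.symm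
  subst hPA
  have hpd : Pd.PosDef := by
    rw [hA]
    refine Matrix.PosDef.posSemidef_add (Matrix.posSemidef_conjTranspose_mul_self H) ?_
    refine Matrix.PosDef.smul Matrix.PosDef.one ?_
    exact_mod_cast pow_pos hσ 2
  have hdet : IsUnit Pd.det := (Matrix.isUnit_iff_isUnit_det Pd).mp hpd.isUnit
  have h1 : S * Pd * S = 1 := by
    rw [mul_eq_one_comm, ← mul_assoc, hS, Matrix.nonsing_inv_mul Pd hdet]
  have : Nonempty (Fin K × Fin NUE) := ⟨(⟨0, hK⟩, ⟨0, hNUE⟩)⟩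
  have h2 : specNorm (S * Pd * S) * specNorm (S * Pd * S)⁻¹ = 1 := by
    rw [h1, inv_one, specNorm_one_aux, mul_one]
  refine ⟨h1, h2, fun hne => ?_⟩
  rw [h2]
  exact one_lt_cond_aux Pd hpd hne
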